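/- Let K be a field of characteristic zero and D ⊆ Δ⁺ a basic subset. Then I(V_D^∘) = I(Y_{w_D}^∘); equivalently, the basic cone V_D (the Zariski closure of the basic cell V_D^∘) coincides with Y_{w_D}, the Zariski closure of Y_{w_D}^∘. -/

import Mathlib

/-- A positive root `(i,j)`: `n ≥ i > j ≥ 1`. -/
def IsPosRoot (n : ℕ) (γ : ℕ × ℕ) : Prop := 1 ≤ γ.2 ∧ γ.2 < γ.1 ∧ γ.1 ≤ n

/-- `γ` is the sum of the roots `α` and `β` (in either order):
`(i,j) + (j,k) = (i,k)`. -/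
def RootSum (α β γ : ℕ × ℕ) : Prop :=
  (α.2 = β.1 ∧ γ = (α.1, β.2)) ∨ (β.2 = α.1 ∧ γ = (β.1, α.2))

/-- A basic subset: a set of positive roots with at most one root in each
row and at most one root in each column. -/
def IsBasic (n : ℕ) (D : Set (ℕ × ℕ)) : Prop :=
  (∀ γ ∈ D, IsPosRoot n γ) ∧
  (∀ α ∈ D, ∀ β ∈ D, α.1 = β.1 → α = β) ∧
  (∀ α ∈ D, ∀ β ∈ D, α.2 = β.2 → α = β)

/-- A positive root `α` is `D`-singular if `α + β ∈ D` for some positive root `β`. -/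
def IsSingular (n : ℕ) (D : Set (ℕ × ℕ)) (α : ℕ × ℕ) : Prop :=
  IsPosRoot n α ∧ ∃ β γ, IsPosRoot n β ∧ RootSum α β γ ∧ γ ∈ D

/-- `M(D) = R(D) \ D`, where `R(D)` is the set of `D`-regular positive roots. -/
def MD (n : ℕ) (D : Set (ℕ × ℕ)) : Set (ℕ × ℕ) :=
  {γ | IsPosRoot n γ ∧ ¬ IsSingular n D γ ∧ γ ∉ D}
/-- The list `[w_D(1), …, w_D(j)]`, defined recursively: `w_D(j)` is the
greatest `i ∈ {1,…,n}` with `(i,j) ∉ M(D)` and `i ∉ {w_D(1),…,w_D(j-1)}`. -/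
noncomputable def wDVals (n : ℕ) (D : Set (ℕ × ℕ)) : ℕ → List ℕ
  | 0 => []
  | j + 1 =>
    let prev := wDVals n D j
    prev ++ [sSup {i | 1 ≤ i ∧ i ≤ n ∧ (i, j + 1) ∉ MD n D ∧ i ∉ prev}]

/-- The permutation `w_D` associated with a basic subset `D` (as a map `ℕ → ℕ`,
meaningful on `{1,…,n}`). -/
noncomputable def wD (n : ℕ) (D : Set (ℕ × ℕ)) (j : ℕ) : ℕ :=
  ((wDVals n D j).getLast?).getD 0
open scoped Classical

/-- The variable set `{x_γ : γ ∈ Δ⁺}`: positive roots of `Δ⁺`. -/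
abbrev PRoot (n : ℕ) : Type := {γ : ℕ × ℕ // IsPosRoot n γ}

/-- A point `v : Δ⁺ → K` of `𝔫₋` realized as a strictly lower triangular
matrix (`1`-based roots, `0`-based matrix indices). -/
noncomputable def matOf (n : ℕ) (K : Type) [Field K] (v : PRoot n → K) :
    Matrix (Fin n) (Fin n) K :=
  fun a b =>
    if h : IsPosRoot n ((a : ℕ) + 1, (b : ℕ) + 1) then v ⟨((a : ℕ) + 1, (b : ℕ) + 1), h⟩
    else 0

/-- The point of `𝔫₋` given by the strictly lower triangular entries of a
matrix. -/
noncomputable def vecOf (n : ℕ) (K : Type) [Field K] (A : Matrix (Fin n) (Fin n) K)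
    (γ : PRoot n) : K :=
  A ⟨γ.1.1 - 1, by obtain ⟨h1, h2, h3⟩ := γ.2; omega⟩
    ⟨γ.1.2 - 1, by obtain ⟨h1, h2, h3⟩ := γ.2; omega⟩

/-- `π`: the strictly lower triangular part of a matrix. -/
def lowerPart (n : ℕ) (K : Type) [Field K] (A : Matrix (Fin n) (Fin n) K) :
    Matrix (Fin n) (Fin n) K :=
  fun a b => if (b : ℕ) < (a : ℕ) then A a b else 0

/-- Membership in `N = UT(n,K)`: upper triangular with units on the diagonal. -/
def IsUni (n : ℕ) (K : Type) [Field K] (g : Matrix (Fin n) (Fin n) K) : Prop :=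
  (∀ i : Fin n, g i i = 1) ∧ ∀ i j : Fin n, j < i → g i j = 0

/-- The element `X_{D,φ} = Σ_{ξ ∈ D} φ(ξ) E_ξ` of `𝔫₋`. -/
noncomputable def XDphi (n : ℕ) (K : Type) [Field K] (D : Set (ℕ × ℕ)) (φ : ℕ × ℕ → K) :
    Matrix (Fin n) (Fin n) K :=
  fun a b => if ((a : ℕ) + 1, (b : ℕ) + 1) ∈ D then φ ((a : ℕ) + 1, (b : ℕ) + 1) else 0

/-- The basic variety `V_{D,φ} = {π(g X_{D,φ} h) : g, h ∈ N}`, as a set of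
points of `𝔫₋`. -/
noncomputable def VDvar (n : ℕ) (K : Type) [Field K] (D : Set (ℕ × ℕ)) (φ : ℕ × ℕ → K) :
    Set (PRoot n → K) :=
  {v | ∃ g h : Matrix (Fin n) (Fin n) K, IsUni n K g ∧ IsUni n K h ∧
    v = vecOf n K (lowerPart n K (g * XDphi n K D φ * h))}

/-- The basic cell `V_D^∘ = ⋃_φ V_{D,φ}`, over all `φ : D → K ∖ {0}`. -/
noncomputable def VDcell (n : ℕ) (K : Type) [Field K] (D : Set (ℕ × ℕ)) :
    Set (PRoot n → K) :=
  {v | ∃ φ : ℕ × ℕ → K, (∀ γ ∈ D, φ γ ≠ 0) ∧ v ∈ VDvar n K D φ}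

/-- The vanishing ideal `I(S)` of a set of points `S`. -/
noncomputable def vanishing (σ K : Type) [Field K] (S : Set (σ → K)) :
    Ideal (MvPolynomial σ K) where
  carrier := {f | ∀ v ∈ S, MvPolynomial.eval v f = 0}
  add_mem' := by
    intro a b ha hb v hv
    simp [map_add, ha v hv, hb v hv]
  zero_mem' := by intro v hv; simp
  smul_mem' := by
    intro c f hf v hv
    simp [smul_eq_mul, hf v hv]
/-- Membership in the Borel subgroup `B` of invertible upper triangular matrices. -/
def InBorel {n : ℕ} {R : Type} [CommRing R] (b : Matrix (Fin n) (Fin n) R) : Prop :=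
  IsUnit b.det ∧ ∀ i j : Fin n, j < i → b i j = 0

/-- The permutation matrix `ẇ_D` of the permutation `w_D`. -/
noncomputable def wDMat (n : ℕ) (K : Type) [Field K] (D : Set (ℕ × ℕ)) :
    Matrix (Fin n) (Fin n) K :=
  fun a b => if ((a : ℕ) + 1) = wD n D ((b : ℕ) + 1) then 1 else 0

/-- `Y_{w_D}^∘ = {X ∈ 𝔫₋ : 1 + X ∈ B ẇ_D B}`, as a set of points of `𝔫₋`. -/
noncomputable def YwDCell (n : ℕ) (K : Type) [Field K] (D : Set (ℕ × ℕ)) :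
    Set (PRoot n → K) :=
  {v | ∃ b₁ b₂ : Matrix (Fin n) (Fin n) K, InBorel b₁ ∧ InBorel b₂ ∧
    1 + matOf n K v = b₁ * wDMat n K D * b₂}

/-! ### The permutation `w_D` -/

section Combinatorics

variable {n : ℕ} {D : Set (ℕ × ℕ)}

theorem wD_succ (n : ℕ) (D : Set (ℕ × ℕ)) (j : ℕ) :
    wD n D (j + 1) =
      sSup {i | 1 ≤ i ∧ i ≤ n ∧ (i, j + 1) ∉ MD n D ∧ i ∉ wDVals n D j} := by
  simp [wD, wDVals]

theorem mem_wDVals {j i : ℕ} : i ∈ wDVals n D j ↔ ∃ k, 1 ≤ k ∧ k ≤ j ∧ wD n D k = i := by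
  induction j with
  | zero =>
    simp only [wDVals, List.not_mem_nil, false_iff]
    rintro ⟨k, h1, h2, -⟩
    omega
  | succ j ih =>
    have h : wDVals n D (j + 1) = wDVals n D j ++ [wD n D (j + 1)] := by
      rw [wD_succ, wDVals]
    rw [h, List.mem_append, ih, List.mem_singleton]
    constructor
    · rintro (⟨k, h1, h2, h3⟩ | rfl)
      · exact ⟨k, h1, by omega, h3⟩
      · exact ⟨j + 1, by omega, le_rfl, rfl⟩
    · rintro ⟨k, h1, h2, h3⟩
      rcases Nat.lt_or_ge j k with hk | hk
      · obtain rfl : k = j + 1 := by omega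
        exact Or.inr h3.symm
      · exact Or.inl ⟨k, h1, hk, h3⟩

theorem length_wDVals (n : ℕ) (D : Set (ℕ × ℕ)) (j : ℕ) : (wDVals n D j).length = j := by
  induction j with
  | zero => rfl
  | succ j ih => simp [wDVals, ih]

/-- The rows `i` among which `w_D(j)` is the greatest. -/
def wDCandidates (n : ℕ) (D : Set (ℕ × ℕ)) (j : ℕ) : Set ℕ :=
  {i | 1 ≤ i ∧ i ≤ n ∧ (i, j) ∉ MD n D ∧ ∀ k, 1 ≤ k → k < j → wD n D k ≠ i}

theorem wD_eq_sSup_candidates {j : ℕ} (hj : 1 ≤ j) :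
    wD n D j = sSup (wDCandidates n D j) := by
  obtain ⟨j, rfl⟩ : ∃ m, j = m + 1 := ⟨j - 1, by omega⟩
  rw [wD_succ]
  congr 1
  ext i
  simp only [Set.mem_ofPred_eq, wDCandidates, mem_wDVals]
  refine and_congr_right fun _ => and_congr_right fun _ => and_congr_right fun _ => ?_
  constructor
  · intro h k hk hkj he
    exact h ⟨k, hk, by omega, he⟩
  · rintro h ⟨k, hk, hkj, he⟩
    exact h k hk (by omega) he

theorem bddAbove_wDCandidates (n : ℕ) (D : Set (ℕ × ℕ)) (j : ℕ) :
    BddAbove (wDCandidates n D j) :=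
  ⟨n, fun _ hi => hi.2.1⟩

theorem notMem_MD_of_le {i j : ℕ} (h : i ≤ j) : (i, j) ∉ MD n D := by
  rintro ⟨⟨-, h2, -⟩, -⟩
  exact absurd h2 (by simpa using h)

theorem wDCandidates_nonempty {j : ℕ} (hj : 1 ≤ j) (hjn : j ≤ n) :
    (wDCandidates n D j).Nonempty := by
  have hcard : (wDVals n D (j - 1)).toFinset.card < (Finset.Icc 1 j).card := by
    have h := List.toFinset_card_le (wDVals n D (j - 1))
    rw [length_wDVals] at h
    rw [Nat.card_Icc]
    omega
  obtain ⟨i, hi, hi'⟩ := Finset.exists_mem_notMem_of_card_lt_card hcard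
  rw [Finset.mem_Icc] at hi
  rw [List.mem_toFinset, mem_wDVals] at hi'
  refine ⟨i, hi.1, by omega, notMem_MD_of_le hi.2, fun k hk hkj he => hi' ⟨k, hk, by omega, he⟩⟩

theorem wD_mem_candidates {j : ℕ} (hj : 1 ≤ j) (hjn : j ≤ n) :
    wD n D j ∈ wDCandidates n D j := by
  rw [wD_eq_sSup_candidates hj]
  exact Nat.sSup_mem (wDCandidates_nonempty hj hjn) (bddAbove_wDCandidates n D j)

theorem le_wD {i j : ℕ} (hj : 1 ≤ j) (hi : i ∈ wDCandidates n D j) : i ≤ wD n D j := by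
  rw [wD_eq_sSup_candidates hj]
  exact le_csSup (bddAbove_wDCandidates n D j) hi

theorem wD_ne {k j : ℕ} (hk : 1 ≤ k) (hkj : k < j) (hjn : j ≤ n) : wD n D k ≠ wD n D j :=
  (wD_mem_candidates (by omega) hjn).2.2.2 k hk hkj

theorem wD_injOn {a b : ℕ} (ha : 1 ≤ a) (han : a ≤ n) (hb : 1 ≤ b) (hbn : b ≤ n)
    (h : wD n D a = wD n D b) : a = b := by
  rcases lt_trichotomy a b with hab | hab | hab
  · exact absurd h (wD_ne ha hab hbn)
  · exact hab
  · exact absurd h.symm (wD_ne hb hab han)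

/-- `w_D` sends the column of a root of `D` to its row, and does not move any other index up. -/
theorem wD_spec (hD : IsBasic n D) {j : ℕ} (hj : 1 ≤ j) (hjn : j ≤ n) :
    (∀ d, (d, j) ∈ D → wD n D j = d) ∧ (j < wD n D j → (wD n D j, j) ∈ D) := by
  induction j using Nat.strong_induction_on with
  | _ j ih =>
  obtain ⟨hpos, hrow, hcol⟩ := hD
  have hmem := wD_mem_candidates (D := D) hj hjn
  have hcases : j < wD n D j → (wD n D j, j) ∈ D ∨ ∃ d, wD n D j < d ∧ (d, j) ∈ D := by
    intro hlt
    by_contra! hcon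
    refine hmem.2.2.1 ⟨⟨hj, hlt, hmem.2.1⟩, ?_, hcon.1⟩
    rintro ⟨-, ⟨p, q⟩, γ, ⟨hq, hqp, hpn⟩, ⟨hs, rfl⟩ | ⟨hs, rfl⟩, hγ⟩
    · simp only at hs hq hqp hγ
      subst hs
      exact hmem.2.2.2 q hq hqp ((ih q hqp hq (by omega)).1 _ hγ)
    · simp only at hs hq hqp hγ
      exact hcon.2 p (by omega) hγ
  have hdiag : ∀ d, (d, j) ∈ D → wD n D j = d := by
    intro d hd
    have hdp := hpos _ hd
    simp only [IsPosRoot] at hdp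
    have hle : d ≤ wD n D j := by
      refine le_wD hj ⟨by omega, hdp.2.2, fun h => h.2.2 hd, ?_⟩
      rintro k hk hkj rfl
      have h := (ih k hkj hk (by omega)).2 (by omega)
      have := congrArg Prod.snd (hrow _ h _ hd rfl)
      simp only at this
      omega
    rcases hcases (by omega) with h | ⟨d', hlt, h⟩
    · exact congrArg Prod.fst (hcol _ h _ hd rfl)
    · have := congrArg Prod.fst (hcol _ h _ hd rfl)
      simp only at this
      omega
  refine ⟨hdiag, fun hlt => ?_⟩
  rcases hcases hlt with h | ⟨d, hd, h⟩
  · exact h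
  · exact absurd (hdiag d h) (by omega)

theorem lt_wD_of_lt {a b : ℕ} (hb : 1 ≤ b) (hba : b < a) (han : a ≤ n)
    (hw : wD n D b < wD n D a) : b < wD n D a := by
  by_contra! hle
  have hmem := wD_mem_candidates (D := D) (by omega : 1 ≤ a) han
  have := le_wD hb ⟨hmem.1, hmem.2.1, notMem_MD_of_le hle,
    fun k hk hkb => hmem.2.2.2 k hk (by omega)⟩
  omega

/-- `w_D` as a permutation of `Fin n`. -/
theorem exists_perm_wD (hD : IsBasic n D) : ∃ σ : Equiv.Perm (Fin n),
    (∀ j : Fin n, wD n D ((j : ℕ) + 1) = (σ j : ℕ) + 1) ∧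
    (∀ i j : Fin n, ((i : ℕ) + 1, (j : ℕ) + 1) ∈ D ↔ j < i ∧ σ j = i) ∧
    ∀ b a : Fin n, b < a → σ b < σ a → b < σ a := by
  have hmem : ∀ j : Fin n, wD n D ((j : ℕ) + 1) ∈ wDCandidates n D ((j : ℕ) + 1) :=
    fun j => wD_mem_candidates (by omega) (by omega)
  let w : Fin n → Fin n := fun j =>
    ⟨wD n D ((j : ℕ) + 1) - 1, by have := (hmem j).1; have := (hmem j).2.1; omega⟩
  have hw : ∀ j : Fin n, wD n D ((j : ℕ) + 1) = (w j : ℕ) + 1 := fun j => by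
    have := (hmem j).1
    simp only [w]
    omega
  have hinj : Function.Injective w := fun a b hab => by
    have := wD_injOn (n := n) (D := D) (a := a + 1) (b := b + 1) (by omega) (by omega) (by omega)
      (by omega) (by rw [hw, hw, hab])
    exact Fin.ext (by omega)
  refine ⟨Equiv.ofBijective w (Finite.injective_iff_bijective.mp hinj), hw, fun i j => ?_,
    fun b a hba hlt => ?_⟩
  · have hs := wD_spec hD (j := (j : ℕ) + 1) (by omega) (by omega)
    rw [hw] at hs
    simp only [Equiv.ofBijective_apply]
    constructor
    · intro h
      have h1 := (hD.1 _ h).2.1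
      have h2 := hs.1 _ h
      simp only at h1
      exact ⟨Fin.lt_def.mpr (by omega), Fin.ext (by omega)⟩
    · rintro ⟨h1, rfl⟩
      exact hs.2 (by have := Fin.lt_def.mp h1; omega)
  · simp only [Equiv.ofBijective_apply, Fin.lt_def] at hlt hba ⊢
    have := lt_wD_of_lt (n := n) (D := D) (a := a + 1) (b := b + 1) (by omega) (by omega)
      (by omega) (by rw [hw, hw]; omega)
    rw [hw] at this
    omega

end Combinatorics

/-! ### Triangular factorizations -/

section Matrices

variable {n : ℕ} {R : Type} [CommRing R]

/-- The first columns of `M`, up to the `k`-th, completed by standard basis vectors. Its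
determinant is a leading principal minor of `M`. -/
def leadingMatrix (M : Matrix (Fin n) (Fin n) R) (k : Fin n) : Matrix (Fin n) (Fin n) R :=
  fun i c => if c ≤ k then M i c else if i = c then 1 else 0

theorem leadingMatrix_map {S : Type} [CommRing S] (φ : R →+* S) (M : Matrix (Fin n) (Fin n) R)
    (k : Fin n) : leadingMatrix (φ.mapMatrix M) k = φ.mapMatrix (leadingMatrix M k) := by
  ext i c
  simp only [leadingMatrix, RingHom.mapMatrix_apply, Matrix.map_apply]
  split_ifs <;> simp

/-- The matrix of a permutation `σ`, with `1` in position `(σ j, j)`. -/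
def permMat (R : Type) [CommRing R] (σ : Equiv.Perm (Fin n)) : Matrix (Fin n) (Fin n) R :=
  fun a b => if a = σ b then 1 else 0

theorem mul_permMat_apply (σ : Equiv.Perm (Fin n)) (M : Matrix (Fin n) (Fin n) R) (i j : Fin n) :
    (M * permMat R σ) i j = M i (σ j) := by
  simp [Matrix.mul_apply, permMat]

theorem permMat_map {S : Type} [CommRing S] (φ : R →+* S) (σ : Equiv.Perm (Fin n)) :
    φ.mapMatrix (permMat R σ) = permMat S σ := by
  ext i c
  simp only [permMat, RingHom.mapMatrix_apply, Matrix.map_apply]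
  split_ifs <;> simp

theorem det_permMat_ne_zero [IsDomain R] (σ : Equiv.Perm (Fin n)) : (permMat R σ).det ≠ 0 := by
  have h : permMat R σ * permMat R σ⁻¹ = 1 := by
    ext i j
    rw [mul_permMat_apply, permMat, Matrix.one_apply]
    simp
  exact left_ne_zero_of_mul_eq_one (by rw [← Matrix.det_mul, h, Matrix.det_one])

theorem InBorel.mul {a b : Matrix (Fin n) (Fin n) R} (ha : InBorel a) (hb : InBorel b) :
    InBorel (a * b) :=
  ⟨by rw [Matrix.det_mul]; exact ha.1.mul hb.1,
    Matrix.BlockTriangular.mul (b := id) (fun i j h => ha.2 i j h) (fun i j h => hb.2 i j h)⟩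

theorem InBorel.inv {a : Matrix (Fin n) (Fin n) R} (ha : InBorel a) : InBorel a⁻¹ := by
  have := Matrix.invertibleOfIsUnitDet a ha.1
  exact ⟨Matrix.isUnit_nonsing_inv_det a ha.1,
    Matrix.blockTriangular_inv_of_blockTriangular (b := id) (fun i j h => ha.2 i j h)⟩

theorem InBorel.diag_ne_zero {K : Type} [Field K] {a : Matrix (Fin n) (Fin n) K} (ha : InBorel a)
    (i : Fin n) : a i i ≠ 0 := by
  have h := ha.1.ne_zero
  rw [Matrix.det_of_isUpperTriangular (fun i j h => ha.2 i j h), Finset.prod_ne_zero_iff] at h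
  exact h i (Finset.mem_univ i)

theorem InBorel.of_diag {K : Type} [Field K] {a : Matrix (Fin n) (Fin n) K}
    (hd : ∀ i, a i i ≠ 0) (hu : ∀ i j : Fin n, j < i → a i j = 0) : InBorel a := by
  refine ⟨?_, hu⟩
  rw [Matrix.det_of_isUpperTriangular (fun i j h => hu i j h), isUnit_iff_ne_zero,
    Finset.prod_ne_zero_iff]
  exact fun i _ => hd i

theorem InBorel.adjugate {K : Type} [Field K] {a : Matrix (Fin n) (Fin n) K} (ha : InBorel a) :
    InBorel a.adjugate := by
  have h : a.adjugate = a.det • a⁻¹ := by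
    rw [Matrix.inv_def, smul_smul, Ring.mul_inverse_cancel _ ha.1, one_smul]
  refine ⟨?_, fun i j hij => by rw [h, Matrix.smul_apply, ha.inv.2 i j hij, smul_zero]⟩
  rw [Matrix.det_adjugate]
  exact ha.1.pow _

/-- The strictly lower triangular part of `P * M * Q` for `P`, `Q` upper triangular depends only
on that of `M`. -/
theorem lower_entry_mul_mul_congr {P Q M M' : Matrix (Fin n) (Fin n) R}
    (hP : ∀ i j : Fin n, j < i → P i j = 0) (hQ : ∀ i j : Fin n, j < i → Q i j = 0)
    (hM : ∀ i j : Fin n, j < i → M i j = M' i j) {i j : Fin n} (hij : j < i) :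
    (P * M * Q) i j = (P * M' * Q) i j := by
  simp only [Matrix.mul_apply, Finset.sum_mul]
  refine Finset.sum_congr rfl fun l _ => Finset.sum_congr rfl fun k _ => ?_
  rcases lt_or_ge k i with hk | hk
  · simp only [hP i k hk, zero_mul]
  rcases lt_or_ge j l with hl | hl
  · rw [hQ l j hl, mul_zero, mul_zero]
  rw [hM k l (hl.trans_lt (hij.trans_le hk))]

variable {K : Type} [Field K]

/-- A matrix with nonvanishing leading principal minors has an `LU` factorization. -/
theorem exists_upper_mul_lower {M : Matrix (Fin n) (Fin n) K}
    (hM : ∀ k, (leadingMatrix M k).det ≠ 0) : ∃ U : Matrix (Fin n) (Fin n) K, InBorel U ∧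
      (∀ i, (M * U) i i = 1) ∧ ∀ i j : Fin n, i < j → (M * U) i j = 0 := by
  let U : Matrix (Fin n) (Fin n) K := fun c k => if c ≤ k then (leadingMatrix M k)⁻¹ c k else 0
  have hU : ∀ i k : Fin n, i ≤ k → (M * U) i k = if i = k then 1 else 0 := by
    intro i k hik
    rw [← Matrix.one_apply, ← Matrix.mul_nonsing_inv _ (isUnit_iff_ne_zero.mpr (hM k)),
      Matrix.mul_apply, Matrix.mul_apply]
    refine Finset.sum_congr rfl fun c _ => ?_
    by_cases hc : c ≤ k
    · simp [U, leadingMatrix, hc]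
    · have : i ≠ c := fun h => hc (h ▸ hik)
      simp [U, leadingMatrix, hc, this]
  have hdiag : ∀ i, (M * U) i i = 1 := fun i => by rw [hU i i le_rfl, if_pos rfl]
  have hlow : ∀ i j : Fin n, i < j → (M * U) i j = 0 := fun i j hij => by
    rw [hU i j hij.le, if_neg hij.ne]
  refine ⟨U, ⟨?_, fun i j hij => if_neg (not_le.mpr hij)⟩, hdiag, hlow⟩
  have hdet : (M * U).det = 1 := by
    rw [Matrix.det_of_isLowerTriangular _ (fun i j h => hlow i j (by simpa using h))]
    simp [hdiag]
  rw [Matrix.det_mul] at hdet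
  exact isUnit_iff_ne_zero.mpr (right_ne_zero_of_mul_eq_one hdet)

/-- A sufficient condition for membership in the Bruhat cell of `σ`. -/
theorem mem_bruhat_cell {σ : Equiv.Perm (Fin n)}
    (hσ : ∀ b a : Fin n, b < a → σ b < σ a → b < σ a) {Q : Matrix (Fin n) (Fin n) K}
    (hQ : ∀ i b : Fin n, b < i → σ b ≠ i → Q i b = 0)
    (hlead : ∀ k, (leadingMatrix (Q.submatrix σ id) k).det ≠ 0) :
    ∃ b c : Matrix (Fin n) (Fin n) K, InBorel b ∧ InBorel c ∧ Q = b * permMat K σ * c := by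
  obtain ⟨U, hU, hdiag, hlow⟩ := exists_upper_mul_lower hlead
  have hsub : ∀ a b, (Q * U) (σ a) b = (Q.submatrix σ id * U) a b := fun a b => by
    simp [Matrix.mul_apply]
  refine ⟨(Q * U).submatrix id σ.symm, U⁻¹, InBorel.of_diag (fun i => ?_) (fun i j hij => ?_),
    hU.inv, ?_⟩
  · obtain ⟨a, rfl⟩ := σ.surjective i
    simp [hsub, hdiag]
  · obtain ⟨a, rfl⟩ := σ.surjective i
    obtain ⟨b, rfl⟩ := σ.surjective j
    rw [Matrix.submatrix_apply, id, Equiv.symm_apply_apply]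
    rcases lt_trichotomy a b with hab | rfl | hab
    · rw [hsub, hlow a b hab]
    · exact absurd hij (lt_irrefl _)
    · have hb := hσ b a hab hij
      rw [Matrix.mul_apply]
      refine Finset.sum_eq_zero fun k _ => ?_
      rcases lt_or_ge b k with hk | hk
      · rw [hU.2 k b hk, mul_zero]
      · rw [hQ _ _ (hk.trans_lt hb) (fun h => (hk.trans_lt hab).ne (σ.injective h)), zero_mul]
  · have : (Q * U).submatrix id σ.symm * permMat K σ = Q * U := by
      ext i j
      rw [mul_permMat_apply]
      simp
    rw [this, Matrix.mul_assoc, Matrix.mul_nonsing_inv _ hU.1, Matrix.mul_one]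

/-- For every `k` some `0`-`1` upper triangular matrix `b` makes the `k`-th leading principal minor
of `b * permMat K σ` nonzero. -/
theorem exists_upper_leading_det_ne_zero (σ : Equiv.Perm (Fin n)) (k : Fin n) :
    ∃ x : Fin n × Fin n → K, (leadingMatrix
      ((Matrix.of fun i j => if i ≤ j then x (i, j) else 0) * permMat K σ) k).det ≠ 0 := by
  let rk : Fin n → ℕ := fun c => (Finset.univ.filter fun c' => c' ≤ k ∧ σ c' < σ c).card
  have hrk_le : ∀ c, rk c ≤ (σ c : ℕ) := fun c => by
    have h : ((Finset.univ.filter fun c' => c' ≤ k ∧ σ c' < σ c).image σ) ⊆ Finset.Iio (σ c) := by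
      intro i hi
      simp only [Finset.mem_image, Finset.mem_filter] at hi
      obtain ⟨c', hc', rfl⟩ := hi
      exact Finset.mem_Iio.mpr hc'.2.2
    have := Finset.card_le_card h
    rwa [Finset.card_image_of_injective _ σ.injective, Fin.card_Iio] at this
  have hrk_lt : ∀ c c', c ≤ k → σ c < σ c' → rk c < rk c' := fun c c' hc hlt => by
    refine Finset.card_lt_card (Finset.ssubset_iff_of_subset ?_ |>.mpr ⟨c, ?_, ?_⟩)
    · intro d hd
      simp only [Finset.mem_filter, Finset.mem_univ, true_and] at hd ⊢
      exact ⟨hd.1, hd.2.trans hlt⟩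
    · simp [hc, hlt]
    · simp
  have hrk_k : ∀ c, c ≤ k → rk c ≤ (k : ℕ) := fun c hc => by
    have h : (Finset.univ.filter fun c' => c' ≤ k ∧ σ c' < σ c) ⊂ Finset.Iic k := by
      refine Finset.ssubset_iff_of_subset ?_ |>.mpr ⟨c, by simpa using hc, by simp⟩
      intro d hd
      simp only [Finset.mem_filter] at hd
      exact Finset.mem_Iic.mpr hd.2.1
    have := Finset.card_lt_card h
    rw [Fin.card_Iic] at this
    exact Nat.lt_succ_iff.mp this
  let τ : Fin n → Fin n := fun c => if h : c ≤ k then ⟨rk c, (hrk_k c h).trans_lt k.2⟩ else c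
  have hτ_le : ∀ c, c ≤ k → τ c ≤ k := fun c hc => by
    simp only [τ, dif_pos hc]
    exact hrk_k c hc
  have hτ_gt : ∀ c, ¬ c ≤ k → τ c = c := fun c hc => by simp only [τ, dif_neg hc]
  have hinj : Function.Injective τ := by
    intro c c' h
    by_cases hc : c ≤ k <;> by_cases hc' : c' ≤ k
    · simp only [τ, dif_pos hc, dif_pos hc', Fin.mk.injEq] at h
      rcases lt_trichotomy (σ c) (σ c') with hlt | heq | hlt
      · exact absurd h (hrk_lt c c' hc hlt).ne
      · exact σ.injective heq
      · exact absurd h (hrk_lt c' c hc' hlt).ne'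
    · exact absurd (hτ_le c hc) (by rw [h, hτ_gt c' hc']; exact hc')
    · exact absurd (hτ_le c' hc') (by rw [← h, hτ_gt c hc]; exact hc)
    · rwa [hτ_gt c hc, hτ_gt c' hc'] at h
  let ρ : Equiv.Perm (Fin n) := Equiv.ofBijective τ (Finite.injective_iff_bijective.mp hinj)
  refine ⟨fun p => if p.1 = τ (σ.symm p.2) then 1 else 0, ?_⟩
  convert det_permMat_ne_zero (R := K) ρ using 2
  ext i c
  simp only [leadingMatrix, mul_permMat_apply, Matrix.of_apply, Equiv.symm_apply_apply, permMat, ρ,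
    Equiv.ofBijective_apply]
  by_cases hc : c ≤ k
  · rw [if_pos hc]
    by_cases hi : i = τ c
    · rw [if_pos hi, if_pos]
      rw [hi]
      simp only [τ, dif_pos hc]
      exact hrk_le c
    · simp [hi]
  · rw [if_neg hc, hτ_gt c hc]

/-- Every Bruhat cell meets the group of lower unitriangular matrices. -/
theorem exists_lower_mem_bruhat_cell [Infinite K] (σ : Equiv.Perm (Fin n)) :
    ∃ b c : Matrix (Fin n) (Fin n) K, InBorel b ∧ InBorel c ∧
      (∀ i, (b * permMat K σ * c) i i = 1) ∧
      ∀ i j : Fin n, i < j → (b * permMat K σ * c) i j = 0 := by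
  let G : Matrix (Fin n) (Fin n) (MvPolynomial (Fin n × Fin n) K) :=
    Matrix.of fun i j => if i ≤ j then MvPolynomial.X (i, j) else 0
  have hG : ∀ x : Fin n × Fin n → K, (MvPolynomial.eval x).mapMatrix G =
      Matrix.of fun i j => if i ≤ j then x (i, j) else 0 := fun x => by
    ext i j
    simp only [G, RingHom.mapMatrix_apply, Matrix.map_apply, Matrix.of_apply]
    split_ifs <;> simp
  have hlead : ∀ (x : Fin n × Fin n → K) (k : Fin n),
      MvPolynomial.eval x (leadingMatrix (G * permMat _ σ) k).det = (leadingMatrix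
        ((Matrix.of fun i j => if i ≤ j then x (i, j) else 0) * permMat K σ) k).det :=
    fun x k => by
      rw [RingHom.map_det, ← leadingMatrix_map, map_mul, permMat_map, hG]
  have hne : (∏ i, (MvPolynomial.X (i, i) : MvPolynomial (Fin n × Fin n) K)) *
      ∏ k, (leadingMatrix (G * permMat _ σ) k).det ≠ 0 := by
    refine mul_ne_zero (Finset.prod_ne_zero_iff.mpr fun i _ => MvPolynomial.X_ne_zero _)
      (Finset.prod_ne_zero_iff.mpr fun k _ h => ?_)
    obtain ⟨x, hx⟩ := exists_upper_leading_det_ne_zero (K := K) σ k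
    exact hx (by rw [← hlead, h, map_zero])
  obtain ⟨x, hx⟩ : ∃ x : Fin n × Fin n → K, MvPolynomial.eval x
      ((∏ i, (MvPolynomial.X (i, i) : MvPolynomial (Fin n × Fin n) K)) *
        ∏ k, (leadingMatrix (G * permMat _ σ) k).det) ≠ 0 := by
    by_contra! hcon
    exact hne (MvPolynomial.funext fun x => by rw [hcon x, map_zero])
  rw [map_mul, map_prod, map_prod, mul_ne_zero_iff, Finset.prod_ne_zero_iff,
    Finset.prod_ne_zero_iff] at hx
  obtain ⟨U, hU, h1, h2⟩ := exists_upper_mul_lower (fun k => by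
    have := hx.2 k (Finset.mem_univ k)
    rwa [hlead] at this)
  exact ⟨_, U, InBorel.of_diag (fun i => by simpa using hx.1 i (Finset.mem_univ i))
    (fun i j hij => if_neg (not_le.mpr hij)), hU, h1, h2⟩

/-- `1` plus the strictly lower triangular part of a matrix. -/
def unitLower (A : Matrix (Fin n) (Fin n) R) : Matrix (Fin n) (Fin n) R :=
  fun i j => if j < i then A i j else if i = j then 1 else 0

theorem unitLower_map {S : Type} [CommRing S] (φ : R →+* S) (M : Matrix (Fin n) (Fin n) R) :
    unitLower (φ.mapMatrix M) = φ.mapMatrix (unitLower M) := by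
  ext i c
  simp only [unitLower, RingHom.mapMatrix_apply, Matrix.map_apply]
  split_ifs <;> simp

/-- A matrix equivalent to `unitLower (b * permMat R σ * c)`, depending polynomially on `b` and
`c`, whose strictly lower triangular part is proportional to that of the permutation matrix. -/
def reducedMatrix (σ : Equiv.Perm (Fin n)) (b c : Matrix (Fin n) (Fin n) R) :
    Matrix (Fin n) (Fin n) R :=
  b.adjugate * unitLower (b * permMat R σ * c) * c.adjugate

theorem reducedMatrix_map {S : Type} [CommRing S] (φ : R →+* S) (σ : Equiv.Perm (Fin n))
    (b c : Matrix (Fin n) (Fin n) R) :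
    reducedMatrix σ (φ.mapMatrix b) (φ.mapMatrix c) = φ.mapMatrix (reducedMatrix σ b c) := by
  simp only [reducedMatrix, map_mul, RingHom.map_adjugate, ← unitLower_map, permMat_map]

/-- The polynomial in `b`, `c` cutting out the complement of a dense part of the Bruhat cell. -/
def cellMinors (σ : Equiv.Perm (Fin n)) (b c : Matrix (Fin n) (Fin n) R) : R :=
  b.det * c.det * ∏ k, (leadingMatrix ((reducedMatrix σ b c).submatrix σ id) k).det

theorem cellMinors_map {S : Type} [CommRing S] (φ : R →+* S) (σ : Equiv.Perm (Fin n))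
    (b c : Matrix (Fin n) (Fin n) R) :
    cellMinors σ (φ.mapMatrix b) (φ.mapMatrix c) = φ (cellMinors σ b c) := by
  simp only [cellMinors, map_mul, map_prod, RingHom.map_det, reducedMatrix_map]
  congr 1
  refine Finset.prod_congr rfl fun k _ => ?_
  rw [← leadingMatrix_map]
  rfl

theorem adjugate_mul_mul_adjugate (P Q M : Matrix (Fin n) (Fin n) R) :
    P.adjugate * (P * M * Q) * Q.adjugate = (P.det * Q.det) • M := by
  rw [Matrix.mul_assoc P, ← Matrix.mul_assoc P.adjugate, Matrix.adjugate_mul, Matrix.mul_assoc,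
    Matrix.mul_assoc, Matrix.mul_adjugate]
  simp [smul_smul, mul_comm]

theorem mem_bruhat_cell_of_cellMinors_ne_zero {σ : Equiv.Perm (Fin n)}
    (hσ : ∀ b a : Fin n, b < a → σ b < σ a → b < σ a) {b c : Matrix (Fin n) (Fin n) K}
    (hb : ∀ i j : Fin n, j < i → b i j = 0) (hc : ∀ i j : Fin n, j < i → c i j = 0)
    (h : cellMinors σ b c ≠ 0) :
    ∃ b' c' : Matrix (Fin n) (Fin n) K, InBorel b' ∧ InBorel c' ∧
      unitLower (b * permMat K σ * c) = b' * permMat K σ * c' := by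
  rw [cellMinors, mul_ne_zero_iff, mul_ne_zero_iff, Finset.prod_ne_zero_iff] at h
  have hb' : InBorel b := ⟨isUnit_iff_ne_zero.mpr h.1.1, hb⟩
  have hc' : InBorel c := ⟨isUnit_iff_ne_zero.mpr h.1.2, hc⟩
  obtain ⟨p, q, hp, hq, he⟩ := mem_bruhat_cell (Q := reducedMatrix σ b c) hσ (fun i j hij hne => by
    rw [reducedMatrix, lower_entry_mul_mul_congr (M := unitLower (b * permMat K σ * c))
      (M' := b * permMat K σ * c) hb'.adjugate.2 hc'.adjugate.2 (fun i j h => if_pos h) hij,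
      adjugate_mul_mul_adjugate, Matrix.smul_apply,
      permMat, if_neg (Ne.symm hne), smul_zero]) (fun k => h.2 k (Finset.mem_univ k))
  refine ⟨b.adjugate⁻¹ * p, q * c.adjugate⁻¹, hb'.adjugate.inv.mul hp, hq.mul hc'.adjugate.inv, ?_⟩
  have hassoc : b.adjugate⁻¹ * p * permMat K σ * (q * c.adjugate⁻¹) =
      b.adjugate⁻¹ * (p * permMat K σ * q) * c.adjugate⁻¹ := by
    simp only [Matrix.mul_assoc]
  rw [hassoc, ← he, reducedMatrix, Matrix.mul_assoc b.adjugate, ← Matrix.mul_assoc b.adjugate⁻¹,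
    Matrix.nonsing_inv_mul _ hb'.adjugate.1, Matrix.one_mul,
    Matrix.mul_nonsing_inv_cancel_right _ _ hc'.adjugate.1]

theorem cellMinors_ne_zero {σ : Equiv.Perm (Fin n)} {b c : Matrix (Fin n) (Fin n) K}
    (hb : InBorel b) (hc : InBorel c)
    (hdiag : ∀ i, (b * permMat K σ * c) i i = 1)
    (hlow : ∀ i j : Fin n, i < j → (b * permMat K σ * c) i j = 0) : cellMinors σ b c ≠ 0 := by
  have hU : unitLower (b * permMat K σ * c) = b * permMat K σ * c := by
    ext i j
    rw [unitLower]
    rcases lt_trichotomy i j with h | rfl | h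
    · rw [if_neg h.not_gt, if_neg h.ne, hlow i j h]
    · simp [hdiag]
    · rw [if_pos h]
  have hdet : b.det * c.det ≠ 0 := mul_ne_zero hb.1.ne_zero hc.1.ne_zero
  refine mul_ne_zero hdet (Finset.prod_ne_zero_iff.mpr fun k _ => ?_)
  rw [reducedMatrix, hU, adjugate_mul_mul_adjugate]
  have hL : leadingMatrix (((b.det * c.det) • permMat K σ).submatrix σ id) k =
      Matrix.diagonal fun i => if i ≤ k then b.det * c.det else 1 := by
    ext i j
    simp only [leadingMatrix, Matrix.submatrix_apply, id, Matrix.smul_apply, permMat,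
      Matrix.diagonal_apply, σ.injective.eq_iff, smul_eq_mul]
    by_cases hij : i = j
    · subst hij; simp
    · simp [hij]
  rw [hL, Matrix.det_diagonal, Finset.prod_ne_zero_iff]
  intro i _
  split_ifs
  · exact hdet
  · exact one_ne_zero

/-- A polynomial in the matrix entries vanishing on the `b * permMat K σ * c` whose `unitLower`
lies in the Bruhat cell of `σ` vanishes for all invertible upper triangular `b`, `c`. -/
theorem eval_entries_eq_zero [Infinite K] {ι : Type} (r s : ι → Fin n) {σ : Equiv.Perm (Fin n)}
    (hσ : ∀ b a : Fin n, b < a → σ b < σ a → b < σ a) (f : MvPolynomial ι K)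
    (hf : ∀ A : Matrix (Fin n) (Fin n) K, (∃ b c, InBorel b ∧ InBorel c ∧
      unitLower A = b * permMat K σ * c) → MvPolynomial.eval (fun γ => A (r γ) (s γ)) f = 0)
    {b c : Matrix (Fin n) (Fin n) K} (hb : InBorel b) (hc : InBorel c) :
    MvPolynomial.eval (fun γ => (b * permMat K σ * c) (r γ) (s γ)) f = 0 := by
  obtain ⟨b₁, c₁, hb₁, hc₁, hdiag, hlow⟩ := exists_lower_mem_bruhat_cell (K := K) σ
  let line : Matrix (Fin n) (Fin n) K → Matrix (Fin n) (Fin n) K →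
      Matrix (Fin n) (Fin n) (Polynomial K) := fun p q =>
    Matrix.of fun i j => Polynomial.C (p i j) + Polynomial.X * Polynomial.C (q i j - p i j)
  have hline : ∀ p q t, (Polynomial.evalRingHom t).mapMatrix (line p q) = p + t • (q - p) := by
    intro p q t
    ext i j
    simp [line]
  have hupper : ∀ {p q : Matrix (Fin n) (Fin n) K}, InBorel p → InBorel q → ∀ (t : K)
      (i j : Fin n), j < i → (p + t • (q - p)) i j = 0 := by
    intro p q hp hq t i j hij
    simp [hp.2 i j hij, hq.2 i j hij]
  let P : Polynomial K := cellMinors σ (line b b₁) (line c c₁)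
  have hP : ∀ t, P.eval t = cellMinors σ (b + t • (b₁ - b)) (c + t • (c₁ - c)) := fun t => by
    rw [← hline, ← hline, cellMinors_map]
    rfl
  let F : Polynomial K := MvPolynomial.aeval
    (fun γ => (line b b₁ * permMat (Polynomial K) σ * line c c₁) (r γ) (s γ)) f
  have hF : ∀ t, F.eval t = MvPolynomial.eval (fun γ =>
      ((b + t • (b₁ - b)) * permMat K σ * (c + t • (c₁ - c))) (r γ) (s γ)) f := fun t => by
    rw [← hline, ← hline, ← permMat_map (Polynomial.evalRingHom t) σ, ← map_mul, ← map_mul]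
    simp only [F]
    rw [← Polynomial.coe_evalRingHom, MvPolynomial.aeval_def, MvPolynomial.hom_eval₂]
    have hid : (Polynomial.evalRingHom t).comp (algebraMap K (Polynomial K)) = RingHom.id K := by
      ext x
      simp
    rw [hid]
    rfl
  have hmul : P * F = 0 := Polynomial.funext fun t => by
    rw [Polynomial.eval_mul, Polynomial.eval_zero, mul_eq_zero, or_iff_not_imp_left, hP, hF]
    intro h
    exact hf _ (mem_bruhat_cell_of_cellMinors_ne_zero hσ (hupper hb hb₁ t) (hupper hc hc₁ t) h)
  have hP0 : P ≠ 0 := fun h => by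
    have h1 := hP 1
    rw [h] at h1
    simp only [one_smul, add_sub_cancel, Polynomial.eval_zero] at h1
    exact cellMinors_ne_zero hb₁ hc₁ hdiag hlow h1.symm
  have h0 := hF 0
  rw [(mul_eq_zero.mp hmul).resolve_left hP0] at h0
  simpa using h0.symm

end Matrices

/-! ### The cells -/

section Cells

variable {n : ℕ} {K : Type} [Field K] {D : Set (ℕ × ℕ)}

theorem wDMat_eq_permMat {σ : Equiv.Perm (Fin n)}
    (hσ : ∀ j : Fin n, wD n D ((j : ℕ) + 1) = (σ j : ℕ) + 1) : wDMat n K D = permMat K σ := by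
  ext a b
  simp only [wDMat, permMat, hσ, Fin.ext_iff, Nat.add_right_cancel_iff]

theorem matOf_apply_of_lt (v : PRoot n → K) {i j : Fin n} (h : j < i) :
    matOf n K v i j = v ⟨((i : ℕ) + 1, (j : ℕ) + 1), by
      exact ⟨by simp, by simpa using h, i.2⟩⟩ :=
  dif_pos _

theorem matOf_apply_of_le (v : PRoot n → K) {i j : Fin n} (h : i ≤ j) : matOf n K v i j = 0 :=
  dif_neg fun hp => by
    have := hp.2.1
    simp only at this
    have := Fin.le_def.mp h
    omega

theorem one_add_matOf_apply (v : PRoot n → K) (i j : Fin n) :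
    (1 + matOf n K v) i j =
      if j < i then matOf n K v i j else if i = j then 1 else 0 := by
  rw [Matrix.add_apply, Matrix.one_apply]
  split_ifs with h1 h2 h2
  · exact absurd (h1 ▸ h2) (lt_irrefl _)
  · rw [matOf_apply_of_le v h1.le, add_zero]
  · rw [zero_add]
  · rw [matOf_apply_of_le v (not_lt.mp h2), add_zero]

theorem one_add_matOf_vecOf (A : Matrix (Fin n) (Fin n) K) :
    1 + matOf n K (vecOf n K A) = unitLower A := by
  ext i j
  rw [one_add_matOf_apply, unitLower]
  split_ifs with h
  · rw [matOf_apply_of_lt _ h]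
    rfl
  · rfl
  · rfl

theorem vecOf_congr {A A' : Matrix (Fin n) (Fin n) K} (h : ∀ i j : Fin n, j < i → A i j = A' i j) :
    vecOf n K A = vecOf n K A' := by
  funext γ
  obtain ⟨h1, h2, h3⟩ := γ.2
  exact h _ _ (Fin.lt_def.mpr (by simp only; omega))

theorem vecOf_lowerPart (A : Matrix (Fin n) (Fin n) K) :
    vecOf n K (lowerPart n K A) = vecOf n K A :=
  vecOf_congr fun _ _ h => if_pos h

theorem vecOf_one_add_matOf (v : PRoot n → K) : vecOf n K (1 + matOf n K v) = v := by
  funext ⟨⟨i, j⟩, hγ⟩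
  obtain ⟨h1, h2, h3⟩ := hγ
  simp only at h1 h2 h3
  have hlt : (⟨j - 1, by omega⟩ : Fin n) < ⟨i - 1, by omega⟩ :=
    Fin.lt_def.mpr (by simp only; omega)
  change (1 + matOf n K v) ⟨i - 1, by omega⟩ ⟨j - 1, by omega⟩ = _
  rw [one_add_matOf_apply, if_pos hlt, matOf_apply_of_lt v hlt]
  congr 2
  exact Prod.ext (by simp only; omega) (by simp only; omega)

/-- The basic cell consists of the strictly lower triangular parts of the elements of a Bruhat
cell. -/
theorem mem_VDcell_iff {σ : Equiv.Perm (Fin n)}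
    (hDσ : ∀ i j : Fin n, ((i : ℕ) + 1, (j : ℕ) + 1) ∈ D ↔ j < i ∧ σ j = i)
    {v : PRoot n → K} : v ∈ VDcell n K D ↔
      ∃ b c, InBorel b ∧ InBorel c ∧ v = vecOf n K (b * permMat K σ * c) := by
  constructor
  · rintro ⟨φ, hφ, g, h, hg, hh, rfl⟩
    let t : Fin n → K := fun i =>
      if σ.symm i < i then φ ((i : ℕ) + 1, (σ.symm i : ℕ) + 1) else 1
    have ht : ∀ i, t i ≠ 0 := fun i => by
      simp only [t]
      split_ifs with hi
      · exact hφ _ ((hDσ i (σ.symm i)).mpr ⟨hi, by simp⟩)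
      · exact one_ne_zero
    have hgB : InBorel g := InBorel.of_diag (fun i => by rw [hg.1 i]; exact one_ne_zero) hg.2
    have hhB : InBorel h := InBorel.of_diag (fun i => by rw [hh.1 i]; exact one_ne_zero) hh.2
    refine ⟨g * Matrix.diagonal t, h, hgB.mul (InBorel.of_diag (fun i => by simpa using ht i)
      (fun i j hij => Matrix.diagonal_apply_ne _ hij.ne')), hhB, ?_⟩
    rw [vecOf_lowerPart, Matrix.mul_assoc g (Matrix.diagonal t)]
    refine vecOf_congr fun i j hij => lower_entry_mul_mul_congr hg.2 hh.2 (fun i j hij => ?_) hij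
    rw [Matrix.diagonal_mul, XDphi, permMat]
    simp only [hDσ]
    by_cases he : σ j = i
    · subst he
      simp [t, hij]
    · rw [if_neg (fun h => he h.2), if_neg (Ne.symm he), mul_zero]
  · rintro ⟨b, c, hb, hc, rfl⟩
    refine ⟨fun γ => if h : IsPosRoot n γ then
      b ⟨γ.1 - 1, by obtain ⟨h1, h2, h3⟩ := h; omega⟩ ⟨γ.1 - 1, by obtain ⟨h1, h2, h3⟩ := h; omega⟩ *
      c ⟨γ.2 - 1, by obtain ⟨h1, h2, h3⟩ := h; omega⟩ ⟨γ.2 - 1, by obtain ⟨h1, h2, h3⟩ := h; omega⟩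
      else 1, fun γ _ => ?_,
      Matrix.of fun i j => b i j * (b j j)⁻¹, Matrix.of fun i j => (c i i)⁻¹ * c i j,
      ⟨fun i => mul_inv_cancel₀ (hb.diag_ne_zero i),
        fun i j hij => by simp [hb.2 i j hij]⟩,
      ⟨fun i => inv_mul_cancel₀ (hc.diag_ne_zero i),
        fun i j hij => by simp [hc.2 i j hij]⟩, ?_⟩
    · dsimp only
      split_ifs
      · exact mul_ne_zero (hb.diag_ne_zero _) (hc.diag_ne_zero _)
      · exact one_ne_zero
    · rw [vecOf_lowerPart]
      have hb' : b = (Matrix.of fun i j => b i j * (b j j)⁻¹) * Matrix.diagonal fun i => b i i := by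
        ext i j
        simp [Matrix.mul_diagonal, hb.diag_ne_zero j]
      have hc' : c = Matrix.diagonal (fun i => c i i) * Matrix.of fun i j => (c i i)⁻¹ * c i j := by
        ext i j
        simp [Matrix.diagonal_mul, hc.diag_ne_zero i]
      have hassoc : b * permMat K σ * c = (Matrix.of fun i j => b i j * (b j j)⁻¹) *
          (Matrix.diagonal (fun i => b i i) * permMat K σ * Matrix.diagonal fun i => c i i) *
          Matrix.of fun i j => (c i i)⁻¹ * c i j := by
        conv_lhs => rw [hb', hc']
        simp only [Matrix.mul_assoc]
      rw [hassoc]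
      refine vecOf_congr fun i j hij => lower_entry_mul_mul_congr
        (fun i j hij => by simp [hb.2 i j hij]) (fun i j hij => by simp [hc.2 i j hij])
        (fun i j hij => ?_) hij
      have hpos : IsPosRoot n ((i : ℕ) + 1, (j : ℕ) + 1) :=
        ⟨by simp, by simpa using hij, i.2⟩
      rw [Matrix.mul_diagonal, Matrix.diagonal_mul, XDphi, permMat]
      simp only [hDσ, hpos, dif_pos, Nat.add_sub_cancel, Fin.eta]
      by_cases he : σ j = i
      · simp [hij, he]
      · rw [if_neg (Ne.symm he), if_neg (fun h => he h.2), mul_zero, zero_mul]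

end Cells

/-- `I(V_D^∘) = I(Y_{w_D}^∘)`; equivalently, the basic cone `V_D`
(the Zariski closure of the basic cell `V_D^∘`) coincides with `Y_{w_D}`. -/
theorem stmt5 (n : ℕ) (hn : 2 ≤ n) (K : Type) [Field K] [CharZero K]
    (D : Set (ℕ × ℕ)) (hD : IsBasic n D) :
    vanishing (PRoot n) K (VDcell n K D) = vanishing (PRoot n) K (YwDCell n K D) := by
  obtain ⟨σ, hσ, hDσ, hord⟩ := exists_perm_wD hD
  ext f
  constructor
  · rintro hf v ⟨b, c, hb, hc, hv⟩
    refine hf v ((mem_VDcell_iff hDσ).mpr ⟨b, c, hb, hc, ?_⟩)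
    rw [← wDMat_eq_permMat hσ, ← hv, vecOf_one_add_matOf]
  · intro hf v hv
    obtain ⟨b, c, hb, hc, rfl⟩ := (mem_VDcell_iff hDσ).mp hv
    refine eval_entries_eq_zero _ _ hord f (fun A hA => ?_) hb hc
    obtain ⟨b', c', hb', hc', hA⟩ := hA
    refine hf (vecOf n K A) ⟨b', c', hb', hc', ?_⟩
    rw [one_add_matOf_vecOf, wDMat_eq_permMat hσ, hA]
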